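/- Let m ≥ 1, let K be an invertible m × m complex matrix, let λ₁, …, λ_m ∈ ℂ satisfy Re λ_l < 0 for every l, and let 0 < β₀ < 1. Then there exists T₀ > 1 such that for every t₀ ≥ T₀ the map sending a vector B = (β₁, …, β_m) ∈ [β₀, 1]^m to the vector in ℂ^m with j-th component ∑_{l=1}^m K_{j,l} · E_{β_l}(λ_l·t₀^{β_l}) is injective on [β₀, 1]^m; in particular, the vector-order is uniquely determined by the observed data. -/

import Mathlib

/-- The (one-parameter) Mittag-Leffler function `E_β(z) = ∑ₖ zᵏ / Γ(βk + 1)`. -/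
noncomputable def mittagLeffler (β : ℝ) (z : ℂ) : ℂ :=
  ∑' k : ℕ, z ^ k / Complex.Gamma (β * k + 1)

open MeasureTheory Set Filter Topology

/-- The closed sector. -/
def CReg (η : ℝ) (s : ℂ) : Prop := s ≠ 0 ∧ -η * ‖s‖ ≤ s.re

/-- A unit direction with real part `-η`. -/
def CDir (η : ℝ) (v : ℂ) : Prop := ‖v‖ = 1 ∧ v.re = -η

/-- Integral along a ray. -/
noncomputable def CRay (g : ℂ → ℂ) (c : ℝ) (v : ℂ) : ℂ :=
  ∫ r in Ioi (0:ℝ), g (c + r * v) * v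

structure CNice (η : ℝ) (g g' : ℂ → ℂ) : Prop where
  der : ∀ s, CReg η s → HasDerivAt g (g' s) s
  cont : ∀ s, CReg η s → ContinuousAt g' s
  bd : ∀ ρ : ℝ, 0 < ρ → ∃ M : ℝ, 0 ≤ M ∧ ∀ s, CReg η s → ρ ≤ ‖s‖ →
    ‖g s‖ ≤ M * Real.exp s.re ∧ ‖g' s‖ ≤ M * Real.exp s.re

lemma CReg.slit {η : ℝ} {s : ℂ} (h1 : η < 1) (hs : CReg η s) : s ∈ Complex.slitPlane := by
  obtain ⟨h0, h⟩ := hs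
  rw [Complex.mem_slitPlane_iff]
  by_contra! hc
  obtain ⟨hc1, hc2⟩ := hc
  have : ‖s‖ = -s.re := by
    have : s = (s.re : ℂ) := by apply Complex.ext <;> simp [hc2]
    rw [this]; simp [abs_of_nonpos hc1]
  have hp : 0 < ‖s‖ := norm_pos_iff.2 h0
  nlinarith

lemma CDir.normSq {η : ℝ} {v : ℂ} (hv : CDir η v) (c r : ℝ) :
    ‖(c + r * v : ℂ)‖ ^ 2 = c ^ 2 + r ^ 2 - 2 * η * c * r := by
  have h1 : v.re ^ 2 + v.im ^ 2 = 1 := by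
    have := hv.1
    have h2 := Complex.sq_norm v
    rw [this, Complex.normSq_apply] at h2; nlinarith
  rw [Complex.sq_norm, Complex.normSq_apply]
  simp [hv.2] at *
  nlinarith

lemma CDir.re {η : ℝ} {v : ℂ} (hv : CDir η v) (c r : ℝ) :
    (c + r * v : ℂ).re = c - η * r := by
  simp [hv.2]; ring

lemma CDir.geo {η : ℝ} {v : ℂ} (hv : CDir η v) (h0 : 0 < η) (h1 : η ≤ 1/2) (c r : ℝ)
    (hc : 0 ≤ c) (hr : 0 ≤ r) : c / 2 ≤ ‖(c + r * v : ℂ)‖ ∧ r / 2 ≤ ‖(c + r * v : ℂ)‖ := by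
  have := hv.normSq c r
  have hcr : 0 ≤ c * r := mul_nonneg hc hr
  constructor
  · apply (pow_le_pow_iff_left₀ (by positivity) (norm_nonneg _) two_ne_zero).1
    rw [this]; nlinarith [sq_nonneg (c - r), sq_nonneg c, sq_nonneg r]
  · apply (pow_le_pow_iff_left₀ (by positivity) (norm_nonneg _) two_ne_zero).1
    rw [this]; nlinarith [sq_nonneg (c - r), sq_nonneg c, sq_nonneg r]

lemma CDir.reg {η : ℝ} {v : ℂ} (hv : CDir η v) (h0 : 0 < η) (h1 : η ≤ 1/2) (c r : ℝ)
    (hc : 0 ≤ c) (hr : 0 ≤ r) (hcr : 0 < c + r) : CReg η (c + r * v : ℂ) := by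
  obtain ⟨ha, hb⟩ := hv.geo h0 h1 c r hc hr
  constructor
  · rw [← norm_pos_iff]
    linarith
  · rw [hv.re]
    have : r - c ≤ ‖(c + r * v : ℂ)‖ := by
      have h3 := norm_sub_norm_le ((r:ℂ) * v) (-(c:ℂ))
      simp [hv.1, abs_of_nonneg hc, abs_of_nonneg hr] at h3
      rw [add_comm (c:ℂ)]; linarith
    nlinarith

lemma C_int_exp {η : ℝ} (h0 : 0 < η) (a : ℝ) (ha : -1 < a) :
    IntegrableOn (fun r : ℝ => r ^ a * Real.exp (-η * r)) (Ioi 0) := by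
  have := integrableOn_rpow_mul_exp_neg_mul_rpow ha one_pos h0
  simpa using this

lemma C_int_exp0 {η : ℝ} (h0 : 0 < η) :
    IntegrableOn (fun r : ℝ => Real.exp (-η * r)) (Ioi 0) := by
  have := C_int_exp h0 0 (by norm_num)
  simpa using this

lemma C_meas {η : ℝ} (h0 : 0 < η) (h1 : η ≤ 1/2) {g : ℂ → ℂ} (hg : ∀ s, CReg η s → ContinuousAt g s)
    {v : ℂ} (hv : CDir η v) (c : ℝ) (hc : 0 ≤ c) :
    AEStronglyMeasurable (fun r : ℝ => g (c + r * v) * v) (volume.restrict (Ioi 0)) := by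
  apply ContinuousOn.aestronglyMeasurable _ measurableSet_Ioi
  intro r hr
  apply ContinuousAt.continuousWithinAt
  have h := hg _ (hv.reg h0 h1 c r hc (le_of_lt hr) (by have : 0 < r := hr; linarith))
  apply ContinuousAt.mul _ continuousAt_const
  apply ContinuousAt.comp (f := fun r : ℝ => (c + r * v : ℂ)) h
  fun_prop

lemma C_int {η : ℝ} (h0 : 0 < η) (h1 : η ≤ 1/2) {g g' : ℂ → ℂ} (hn : CNice η g g')
    {v : ℂ} (hv : CDir η v) (c : ℝ) (hc : 0 < c) :
    IntegrableOn (fun r : ℝ => g (c + r * v) * v) (Ioi 0) ∧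
    IntegrableOn (fun r : ℝ => g' (c + r * v) * v) (Ioi 0) := by
  obtain ⟨M, hM0, hM⟩ := hn.bd (c/2) (by positivity)
  have hint : IntegrableOn (fun r : ℝ => M * Real.exp c * Real.exp (-η * r)) (Ioi 0) :=
    (C_int_exp0 h0).const_mul _
  constructor
  · apply Integrable.mono' hint (C_meas h0 h1 (fun s hs => (hn.der s hs).continuousAt) hv c hc.le)
    filter_upwards [ae_restrict_mem measurableSet_Ioi] with r hr
    have hr : 0 < r := hr
    have := (hM _ (hv.reg h0 h1 c r hc.le hr.le (by linarith)) (hv.geo h0 h1 c r hc.le hr.le).1).1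
    rw [norm_mul, hv.1, mul_one, mul_assoc, ← Real.exp_add]
    rw [hv.re] at this
    convert this using 3; ring
  · apply Integrable.mono' hint (C_meas h0 h1 hn.cont hv c hc.le)
    filter_upwards [ae_restrict_mem measurableSet_Ioi] with r hr
    have hr : 0 < r := hr
    have := (hM _ (hv.reg h0 h1 c r hc.le hr.le (by linarith)) (hv.geo h0 h1 c r hc.le hr.le).1).2
    rw [norm_mul, hv.1, mul_one, mul_assoc, ← Real.exp_add]
    rw [hv.re] at this
    convert this using 3; ring

lemma C_ftc {η : ℝ} (h0 : 0 < η) (h1 : η ≤ 1/2) {g g' : ℂ → ℂ} (hn : CNice η g g')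
    {v : ℂ} (hv : CDir η v) (c : ℝ) (hc : 0 < c) : CRay g' c v = - g c := by
  obtain ⟨M, hM0, hM⟩ := hn.bd (c/2) (by positivity)
  unfold CRay
  have := integral_Ioi_of_hasDerivAt_of_tendsto' (a := (0:ℝ)) (m := (0:ℂ))
    (f := fun r : ℝ => g (c + r * v)) (f' := fun r : ℝ => g' (c + r * v) * v) ?_ 
    (C_int h0 h1 hn hv c hc).2 ?_
  · rw [this]; simp
  · intro r hr
    have hr : 0 ≤ r := hr
    have h := hn.der _ (hv.reg h0 h1 c r hc.le hr (by linarith))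
    have h2 : HasDerivAt (fun r : ℝ => (c + r * v : ℂ)) v r := by
      have := ((hasDerivAt_id (r:ℝ)).ofReal_comp.mul_const v).const_add (c:ℂ)
      simpa using this
    have := h.comp r h2
    exact this
  · have ht : Tendsto (fun r : ℝ => M * Real.exp (c - η * r)) atTop (𝓝 0) := by
      rw [show (0:ℝ) = M * 0 by simp]
      apply Tendsto.const_mul
      apply Real.tendsto_exp_atBot.comp
      apply tendsto_atBot_add_const_left _ c (f := fun r => -(η * r))
      exact tendsto_neg_atTop_atBot.comp (tendsto_id.const_mul_atTop h0)
    apply squeeze_zero_norm' _ ht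
    filter_upwards [eventually_ge_atTop 0] with r hr
    have := (hM _ (hv.reg h0 h1 c r hc.le hr (by linarith)) (hv.geo h0 h1 c r hc.le hr).1).1
    rwa [hv.re] at this

lemma C_deriv {η : ℝ} (h0 : 0 < η) (h1 : η ≤ 1/2) {g g' : ℂ → ℂ} (hn : CNice η g g')
    {v : ℂ} (hv : CDir η v) (c : ℝ) (hc : 0 < c) :
    HasDerivAt (fun x => CRay g x v) (- g c) c := by
  obtain ⟨M, hM0, hM⟩ := hn.bd (c/4) (by positivity)
  rw [← C_ftc h0 h1 hn hv c hc]
  unfold CRay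
  have hs : Ioo (c/2) (2*c) ∈ 𝓝 c := Ioo_mem_nhds (by linarith) (by linarith)
  have := hasDerivAt_integral_of_dominated_loc_of_deriv_le (μ := volume.restrict (Ioi (0:ℝ)))
    (F := fun (x : ℝ) (r : ℝ) => g (x + r * v) * v)
    (F' := fun (x : ℝ) (r : ℝ) => g' (x + r * v) * v) (x₀ := c) 
    (bound := fun r => M * Real.exp (2*c) * Real.exp (-η * r)) hs ?_ ?_ ?_ ?_ ?_ ?_
  · exact this.2
  · filter_upwards [hs] with x hx
    exact (C_meas h0 h1 (fun s hs => (hn.der s hs).continuousAt) hv x (by linarith [hx.1]))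
  · exact (C_int h0 h1 hn hv c hc).1
  · exact (C_meas h0 h1 hn.cont hv c hc.le)
  · filter_upwards [ae_restrict_mem measurableSet_Ioi] with r hr x hx
    have hr : 0 < r := hr
    obtain ⟨hx1, hx2⟩ := hx
    have hx0 : 0 ≤ x := by linarith
    have := (hM _ (hv.reg h0 h1 x r hx0 hr.le (by linarith)) 
      (by have := (hv.geo h0 h1 x r hx0 hr.le).1; linarith)).2
    rw [norm_mul, hv.1, mul_one, mul_assoc, ← Real.exp_add]
    rw [hv.re] at this
    refine this.trans ?_
    gcongr
    linarith
  · exact (C_int_exp0 h0).const_mul _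
  · filter_upwards [ae_restrict_mem measurableSet_Ioi] with r hr x hx
    have hr : 0 < r := hr
    obtain ⟨hx1, hx2⟩ := hx
    have hx0 : 0 ≤ x := by linarith
    have h := hn.der _ (hv.reg h0 h1 x r hx0 hr.le (by linarith))
    have h2 : HasDerivAt (fun x : ℝ => (x + r * v : ℂ)) 1 x := by
      have := ((hasDerivAt_id (x:ℝ)).ofReal_comp.add_const (r * v:ℂ))
      simpa using this
    have := (h.comp x h2).mul_const v
    simpa using this

lemma C_dom {η : ℝ} (h0 : 0 < η) (h1 : η ≤ 1/2) {g : ℂ → ℂ} {C a : ℝ} (ha0 : 0 ≤ a)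
    (hC : 0 ≤ C)
    (hb : ∀ s, CReg η s → ‖g s‖ ≤ C * Real.exp s.re * ‖s‖ ^ (-a))
    {v : ℂ} (hv : CDir η v) (c r : ℝ) (hc : 0 ≤ c) (hc1 : c ≤ 1) (hr : 0 < r) :
    ‖g (c + r * v) * v‖ ≤ (C * Real.exp 1 * (1/2) ^ (-a)) * (r ^ (-a) * Real.exp (-η * r)) := by
  have := hb _ (hv.reg h0 h1 c r hc hr.le (by linarith))
  rw [norm_mul, hv.1, mul_one]
  rw [hv.re] at this
  have h2 : ‖(c + r * v : ℂ)‖ ^ (-a) ≤ (1/2) ^ (-a) * r ^ (-a) := by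
    rw [← Real.mul_rpow (by norm_num) hr.le]
    apply Real.rpow_le_rpow_of_nonpos (by positivity) _ (by linarith)
    have := (hv.geo h0 h1 c r hc hr.le).2
    linarith
  have h3 : Real.exp (c - η * r) ≤ Real.exp 1 * Real.exp (-η * r) := by
    rw [← Real.exp_add]; gcongr; linarith
  calc _ ≤ _ := this
    _ ≤ C * (Real.exp 1 * Real.exp (-η * r)) * ((1/2) ^ (-a) * r ^ (-a)) := by gcongr
    _ = _ := by ring

lemma C_int0 {η : ℝ} (h0 : 0 < η) (h1 : η ≤ 1/2) {g : ℂ → ℂ} {C a : ℝ} (ha0 : 0 ≤ a)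
    (ha1 : a < 1) (hC : 0 ≤ C) (hg : ∀ s, CReg η s → ContinuousAt g s)
    (hb : ∀ s, CReg η s → ‖g s‖ ≤ C * Real.exp s.re * ‖s‖ ^ (-a))
    {v : ℂ} (hv : CDir η v) (c : ℝ) (hc : 0 ≤ c) (hc1 : c ≤ 1) :
    IntegrableOn (fun r : ℝ => g (c + r * v) * v) (Ioi 0) := by
  apply Integrable.mono' ((C_int_exp h0 (-a) (by linarith)).const_mul (C * Real.exp 1 * (1/2) ^ (-a)))
    (C_meas h0 h1 hg hv c hc)
  filter_upwards [ae_restrict_mem measurableSet_Ioi] with r hr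
  exact C_dom h0 h1 ha0 hC hb hv c r hc hc1 hr

lemma C_cont0 {η : ℝ} (h0 : 0 < η) (h1 : η ≤ 1/2) {g : ℂ → ℂ} {C a : ℝ} (ha0 : 0 ≤ a)
    (ha1 : a < 1) (hC : 0 ≤ C) (hg : ∀ s, CReg η s → ContinuousAt g s)
    (hb : ∀ s, CReg η s → ‖g s‖ ≤ C * Real.exp s.re * ‖s‖ ^ (-a))
    {v : ℂ} (hv : CDir η v) :
    Tendsto (fun c => CRay g c v) (𝓝[>] 0) (𝓝 (CRay g 0 v)) := by
  unfold CRay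
  apply tendsto_integral_filter_of_dominated_convergence
    (fun r => (C * Real.exp 1 * (1/2) ^ (-a)) * (r ^ (-a) * Real.exp (-η * r)))
  · filter_upwards [self_mem_nhdsWithin] with c hc
    exact C_meas h0 h1 hg hv c (le_of_lt hc)
  · filter_upwards [Ioo_mem_nhdsGT (show (0:ℝ) < 1 by norm_num)] with c hc
    filter_upwards [ae_restrict_mem measurableSet_Ioi] with r hr
    exact C_dom h0 h1 ha0 hC hb hv c r hc.1.le hc.2.le hr
  · exact (C_int_exp h0 (-a) (by linarith)).const_mul _
  · filter_upwards [ae_restrict_mem measurableSet_Ioi] with r hr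
    have hr : 0 < r := hr
    have h := hg _ (hv.reg h0 h1 0 r le_rfl hr.le (by linarith))
    apply Tendsto.mono_left _ nhdsWithin_le_nhds
    have : ContinuousAt (fun c : ℝ => g (c + r * v) * v) 0 := by
      apply ContinuousAt.mul _ continuousAt_const
      apply ContinuousAt.comp (f := fun c : ℝ => (c + r * v : ℂ)) h
      fun_prop
    exact this

lemma C_move {η : ℝ} (h0 : 0 < η) (h1 : η ≤ 1/2) {g g' : ℂ → ℂ} (hn : CNice η g g') {C a : ℝ}
    (ha0 : 0 ≤ a) (ha1 : a < 1) (hC : 0 ≤ C)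
    (hb : ∀ s, CReg η s → ‖g s‖ ≤ C * Real.exp s.re * ‖s‖ ^ (-a))
    {v w : ℂ} (hv : CDir η v) (hw : CDir η w) (c : ℝ) (hc : 0 < c) :
    CRay g c v - CRay g c w = CRay g 0 v - CRay g 0 w := by
  have hg : ∀ s, CReg η s → ContinuousAt g s := fun s hs => (hn.der s hs).continuousAt
  have hd : ∀ x ∈ Ioi (0:ℝ), HasDerivAt (fun x => CRay g x v - CRay g x w) 0 x := by
    intro x hx
    have := (C_deriv h0 h1 hn hv x hx).sub (C_deriv h0 h1 hn hw x hx)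
    rw [sub_self] at this
    exact this
  have hconst : ∀ x ∈ Ioi (0:ℝ), CRay g x v - CRay g x w = CRay g c v - CRay g c w := by
    intro x hx
    exact (isOpen_Ioi).is_const_of_deriv_eq_zero (isPreconnected_Ioi)
      (fun y hy => (hd y hy).differentiableAt.differentiableWithinAt)
      (fun y hy => (hd y hy).deriv) hx hc
  have ht := (C_cont0 h0 h1 ha0 ha1 hC hg hb hv).sub (C_cont0 h0 h1 ha0 ha1 hC hg hb hw)
  refine tendsto_nhds_unique ?_ ht
  apply Tendsto.congr' _ tendsto_const_nhds
  filter_upwards [self_mem_nhdsWithin] with x hx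
  exact (hconst x hx).symm

lemma C_gi_bound {a : ℝ} {z : ℂ} {t : ℝ} (ht : 0 < t) :
    ‖(t:ℂ) ^ (a:ℂ) * Complex.exp (-(z * t))‖ = t ^ a * Real.exp (-z.re * t) := by
  rw [norm_mul, Complex.norm_cpow_real, Complex.norm_exp, Complex.norm_real,
    Real.norm_of_nonneg ht.le]
  simp

lemma C_gi_meas (a : ℝ) (z : ℂ) : AEStronglyMeasurable
    (fun t : ℝ => (t:ℂ) ^ (a:ℂ) * Complex.exp (-(z * t))) (volume.restrict (Ioi 0)) := by
  apply ContinuousOn.aestronglyMeasurable _ measurableSet_Ioi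
  intro t ht
  have ht : 0 < t := ht
  apply ContinuousAt.continuousWithinAt
  apply ContinuousAt.mul
  · exact (Complex.continuous_ofReal.continuousAt).cpow continuousAt_const (by simp [ht])
  · fun_prop

lemma C_gi_int {a : ℝ} (ha : -1 < a) {z : ℂ} (hz : 0 < z.re) : IntegrableOn
    (fun t : ℝ => (t:ℂ) ^ (a:ℂ) * Complex.exp (-(z * t))) (Ioi 0) := by
  apply Integrable.mono' (C_int_exp hz a ha) (C_gi_meas a z)
  filter_upwards [ae_restrict_mem measurableSet_Ioi] with t ht
  exact (C_gi_bound ht).le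

lemma C_gi_diff {a : ℝ} (ha : -1 < a) {z : ℂ} (hz : 0 < z.re) : DifferentiableAt ℂ
    (fun z : ℂ => ∫ t in Ioi (0:ℝ), (t:ℂ) ^ (a:ℂ) * Complex.exp (-(z * t))) z := by
  have hs : {x : ℂ | z.re / 2 < x.re} ∈ 𝓝 z :=
    (isOpen_lt continuous_const Complex.continuous_re).mem_nhds (by simp; linarith)
  have := hasDerivAt_integral_of_dominated_loc_of_deriv_le (μ := volume.restrict (Ioi (0:ℝ)))
    (F := fun (z : ℂ) (t : ℝ) => (t:ℂ) ^ (a:ℂ) * Complex.exp (-(z * t)))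
    (F' := fun (z : ℂ) (t : ℝ) => -((t:ℂ) ^ ((a+1:ℝ):ℂ) * Complex.exp (-(z * t)))) (x₀ := z)
    (bound := fun t => t ^ (a+1) * Real.exp (-(z.re/2) * t)) hs ?_ ?_ ?_ ?_ ?_ ?_
  · exact this.2.differentiableAt
  · exact Eventually.of_forall fun x => C_gi_meas a x
  · exact C_gi_int ha hz
  · exact (C_gi_meas (a+1) z).neg
  · filter_upwards [ae_restrict_mem measurableSet_Ioi] with t ht x hx
    have ht : 0 < t := ht
    have hx : z.re / 2 < x.re := hx
    rw [norm_neg, C_gi_bound ht]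
    gcongr
  · exact C_int_exp (by positivity) _ (by linarith)
  · filter_upwards [ae_restrict_mem measurableSet_Ioi] with t ht x hx
    have ht : 0 < t := ht
    have h := ((hasDerivAt_id x).mul_const (t:ℂ)).neg.cexp.const_mul ((t:ℂ) ^ (a:ℂ))
    have h2 : (t:ℂ) ^ ((a+1:ℝ):ℂ) = (t:ℂ) ^ (a:ℂ) * t := by
      push_cast
      rw [Complex.cpow_add _ _ (by simp [ht.ne']), Complex.cpow_one]
    rw [h2]
    refine h.congr_deriv ?_
    simp
    ring

lemma C_gammaInt {a : ℝ} (ha : -1 < a) {z : ℂ} (hz : 0 < z.re) :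
    ∫ t in Ioi (0:ℝ), (t:ℂ) ^ (a:ℂ) * Complex.exp (-(z * t)) =
      (1 / z) ^ ((a:ℂ) + 1) * Complex.Gamma (a + 1) := by
  have hopen : IsOpen {x : ℂ | 0 < x.re} := isOpen_lt continuous_const Complex.continuous_re
  have hf : AnalyticOnNhd ℂ (fun z : ℂ => ∫ t in Ioi (0:ℝ), (t:ℂ) ^ (a:ℂ) * Complex.exp (-(z * t)))
      {x : ℂ | 0 < x.re} :=
    DifferentiableOn.analyticOnNhd (fun x hx => (C_gi_diff ha hx).differentiableWithinAt) hopen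
  have hg : AnalyticOnNhd ℂ (fun z : ℂ => (1 / z) ^ ((a:ℂ) + 1) * Complex.Gamma (a + 1))
      {x : ℂ | 0 < x.re} := by
    apply DifferentiableOn.analyticOnNhd _ hopen
    intro x hx
    have hx : 0 < x.re := hx
    have hx0 : x ≠ 0 := by rintro rfl; simp at hx
    apply DifferentiableAt.differentiableWithinAt
    apply DifferentiableAt.mul_const
    apply DifferentiableAt.cpow_const
    · exact (differentiableAt_const _).div differentiableAt_id hx0
    · left
      simp only [one_div, Complex.inv_re]
      have : 0 < Complex.normSq x := Complex.normSq_pos.2 hx0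
      positivity
  have hpre : IsPreconnected {x : ℂ | 0 < x.re} := (convex_halfSpace_re_gt 0).isPreconnected
  refine hf.eqOn_of_preconnected_of_frequently_eq hg hpre (z₀ := 1) (by simp) ?_ hz
  have hreal : ∀ r : ℝ, 0 < r → ∫ t in Ioi (0:ℝ), (t:ℂ) ^ (a:ℂ) * Complex.exp (-((r:ℂ) * t)) =
      (1 / (r:ℂ)) ^ ((a:ℂ) + 1) * Complex.Gamma (a + 1) := by
    intro r hr
    have := Complex.integral_cpow_mul_exp_neg_mul_Ioi (a := (a:ℂ) + 1) (r := r)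
      (by simp; linarith) hr
    rw [← this]; simp
  have htend : Tendsto (fun r : ℝ => (r:ℂ)) (𝓝[>] 1) (𝓝[≠] 1) := by
    apply tendsto_nhdsWithin_of_tendsto_nhds_of_eventually_within
    · have : Tendsto (fun r : ℝ => (r:ℂ)) (𝓝 1) (𝓝 ((1:ℝ):ℂ)) := Complex.continuous_ofReal.tendsto 1
      simpa using this.mono_left nhdsWithin_le_nhds
    · filter_upwards [self_mem_nhdsWithin] with r hr
      have hr : 1 < r := hr
      simp; linarith
  apply htend.frequently
  apply Eventually.frequently
  filter_upwards [self_mem_nhdsWithin] with r hr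
  have hr : 1 < r := hr
  exact hreal r (by linarith)

lemma C_hankel0 {θ ε w : ℝ} (hθ1 : -Real.pi < θ) (hθ2 : θ ≤ Real.pi) (hcos : Real.cos θ < 0)
    (he : Complex.exp (ε * Complex.I) = -1) (he1 : -Real.pi < ε - θ) (he2 : ε - θ ≤ Real.pi)
    (hw : w < 1) :
    CRay (fun s => Complex.exp s * s ^ (-(w:ℂ))) 0 (Complex.exp (θ * Complex.I)) =
      Complex.exp (ε * (1 - w) * Complex.I) * Complex.Gamma (1 - w) := by
  set v := Complex.exp (θ * Complex.I) with hv
  have hlog : Complex.log v = θ * Complex.I := by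
    rw [hv, Complex.log_exp] <;> simpa
  have hv0 : v ≠ 0 := Complex.exp_ne_zero _
  have hre : 0 < (-v).re := by
    rw [hv]; simp [Complex.exp_ofReal_mul_I_re]; exact hcos
  have hinv : 1 / (-v) = Complex.exp ((ε - θ) * Complex.I) := by
    rw [sub_mul, Complex.exp_sub, he, ← hv]; field_simp
  have hlog2 : Complex.log (1 / (-v)) = (ε - θ) * Complex.I := by
    rw [hinv, Complex.log_exp] <;> simp <;> linarith
  have hinv0 : 1 / (-v) ≠ 0 := by rw [hinv]; exact Complex.exp_ne_zero _
  have hI := C_gammaInt (a := -w) (z := -v) (by linarith) hre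
  rw [show ((-w : ℝ) : ℂ) + 1 = 1 - w by push_cast; ring,
    show ((-w : ℝ) : ℂ) = 1 - w - 1 by push_cast; ring] at hI
  unfold CRay
  have : ∀ r ∈ Ioi (0:ℝ), Complex.exp ((0:ℝ) + r * v) * ((0:ℝ) + r * v) ^ (-(w:ℂ)) * v =
      (r:ℂ) ^ ((1 - w : ℂ) - 1) * Complex.exp (-(-v * r)) * v ^ (1 - w : ℂ) := by
    intro r hr
    have hr : 0 < r := hr
    have h1 : (r * v : ℂ) ^ (-(w:ℂ)) = (r:ℂ) ^ (-(w:ℂ)) * v ^ (-(w:ℂ)) := by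
      rw [Complex.cpow_def_of_ne_zero (by simp [hr.ne', hv0]),
        Complex.cpow_def_of_ne_zero (by simp [hr.ne']), Complex.cpow_def_of_ne_zero hv0,
        Complex.log_ofReal_mul hr hv0, ← Complex.exp_add, Complex.ofReal_log hr.le]
      ring_nf
    have h2 : v ^ (1 - w : ℂ) = v ^ (-(w:ℂ)) * v := by
      rw [show (1 - w : ℂ) = -w + 1 by ring, Complex.cpow_add _ _ hv0, Complex.cpow_one]
    rw [h2]
    simp only [Complex.ofReal_zero, zero_add, h1]
    rw [show (1 - w - 1 : ℂ) = -w by ring, show -(-v * r) = r * v by ring]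
    ring
  rw [setIntegral_congr_fun measurableSet_Ioi this, integral_mul_const, hI]
  rw [Complex.cpow_def_of_ne_zero hv0, Complex.cpow_def_of_ne_zero hinv0, hlog, hlog2]
  rw [mul_right_comm, ← Complex.exp_add]
  ring_nf

/-- positive direction -/
noncomputable def Cv (η : ℝ) : ℂ := Complex.exp (Real.arccos (-η) * Complex.I)
/-- negative direction -/
noncomputable def Cw (η : ℝ) : ℂ := Complex.exp ((-Real.arccos (-η) : ℝ) * Complex.I)

lemma Cv_dir {η : ℝ} (h0 : 0 < η) (h1 : η ≤ 1/2) : CDir η (Cv η) := by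
  constructor
  · exact Complex.norm_exp_ofReal_mul_I _
  · rw [Cv, Complex.exp_ofReal_mul_I_re, Real.cos_arccos] <;> linarith

lemma Cw_dir {η : ℝ} (h0 : 0 < η) (h1 : η ≤ 1/2) : CDir η (Cw η) := by
  constructor
  · exact Complex.norm_exp_ofReal_mul_I _
  · rw [Cw, Complex.exp_ofReal_mul_I_re, Real.cos_neg, Real.cos_arccos] <;> linarith

/-- The Hankel contour integral. -/
noncomputable def CH (η : ℝ) (g : ℂ → ℂ) (c : ℝ) : ℂ := CRay g c (Cv η) - CRay g c (Cw η)

lemma C_hankel00 {η w : ℝ} (h0 : 0 < η) (h1 : η ≤ 1/2) (hw0 : 0 ≤ w) (hw : w < 1) :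
    CH η (fun s => Complex.exp s * s ^ (-(w:ℂ))) 0 =
      2 * Real.pi * Complex.I * (Complex.Gamma w)⁻¹ := by
  have hp := Real.pi_pos
  have hcos : Real.cos (Real.arccos (-η)) < 0 := by
    rw [Real.cos_arccos] <;> linarith
  have ha1 : 0 < Real.arccos (-η) := by rw [Real.arccos_pos]; linarith
  have ha2 := Real.arccos_le_pi (-η)
  have hA := C_hankel0 (θ := Real.arccos (-η)) (ε := Real.pi) (w := w) (by linarith) ha2 hcos
    (by simp) (by linarith) (by linarith) hw
  have ha3 : Real.arccos (-η) < Real.pi := by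
    rcases ha2.lt_or_eq with h | h
    · exact h
    · rw [Real.arccos_eq_pi] at h; linarith
  have hB := C_hankel0 (θ := -Real.arccos (-η)) (ε := -Real.pi) (w := w) (by linarith) (by linarith)
    (by rwa [Real.cos_neg])
    (by rw [Complex.ofReal_neg, neg_mul, Complex.exp_neg]; simp) (by linarith) (by linarith) hw
  unfold CH Cv Cw
  rw [hA, hB, ← sub_mul]
  have hs : Complex.exp (Real.pi * (1 - w) * Complex.I) - 
      Complex.exp ((-Real.pi : ℝ) * (1 - w) * Complex.I) = 2 * Complex.I * Complex.sin (Real.pi * w) := by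
    have : Complex.sin (Real.pi * w) = Complex.sin (Real.pi * (1 - w)) := by
      rw [show (Real.pi * (1 - w) : ℂ) = Real.pi - Real.pi * w by ring, Complex.sin_pi_sub]
    rw [this, Complex.sin]
    push_cast
    ring_nf
    simp
  rw [hs]
  rcases hw0.eq_or_lt with h | h
  · subst h
    simp
  · have hG := Complex.Gamma_mul_Gamma_one_sub w
    have hG0 : Complex.Gamma w ≠ 0 := Complex.Gamma_ne_zero_of_re_pos (by simpa using h)
    have hsin : Complex.sin (Real.pi * w) ≠ 0 := by
      rw [← Complex.ofReal_mul, ← Complex.ofReal_sin]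
      have := Real.sin_pos_of_pos_of_lt_pi (x := Real.pi * w) (by positivity) (by nlinarith)
      exact_mod_cast this.ne'
    rw [eq_div_iff hsin] at hG
    rw [eq_comm, ← div_eq_mul_inv, div_eq_iff hG0]
    linear_combination (-2 * Complex.I) * hG

lemma C_nice1 {η w : ℝ} (h0 : 0 < η) (h1 : η ≤ 1/2) (hw0 : 0 ≤ w) :
    CNice η (fun s => Complex.exp s * s ^ (-(w:ℂ)))
      (fun s => Complex.exp s * s ^ (-(w:ℂ)) - w * (Complex.exp s * s ^ (-((w+1:ℝ):ℂ)))) := by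
  refine ⟨?_, ?_, ?_⟩
  · intro s hs
    have h := (Complex.hasDerivAt_exp s).mul ((hasDerivAt_id s).cpow_const (c := -(w:ℂ))
      (hs.slit (by linarith)))
    refine h.congr_deriv ?_
    rw [show (-((w+1:ℝ):ℂ)) = -w - 1 by push_cast; ring]
    simp only [id]
    ring
  · intro s hs
    have hsl := hs.slit (by linarith)
    have h2 : ∀ c : ℂ, ContinuousAt (fun s : ℂ => s ^ c) s := fun c =>
      continuousAt_id.cpow continuousAt_const hsl
    have := h2 (-(w:ℂ))
    have := h2 (-((w+1:ℝ):ℂ))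
    fun_prop
  · intro ρ hρ
    refine ⟨ρ ^ (-w) + w * ρ ^ (-(w+1)), by positivity, ?_⟩
    intro s hs hsρ
    have hn : ∀ u : ℝ, 0 ≤ u → ‖Complex.exp s * s ^ (-(u:ℂ))‖ ≤ ρ ^ (-u) * Real.exp s.re := by
      intro u hu
      rw [norm_mul, Complex.norm_exp, ← Complex.ofReal_neg, Complex.norm_cpow_real, mul_comm]
      gcongr 1
      exact Real.rpow_le_rpow_of_nonpos hρ hsρ (by linarith)
    have ha := hn w hw0
    have hb := hn (w+1) (by linarith)
    constructor
    · refine ha.trans ?_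
      gcongr
      have : 0 ≤ w * ρ ^ (-(w+1)) := by positivity
      linarith
    · refine (norm_sub_le _ _).trans ?_
      rw [add_mul, norm_mul (w:ℂ), Complex.norm_real, Real.norm_of_nonneg hw0, mul_assoc w]
      gcongr

lemma C_ray_sub {η : ℝ} (h0 : 0 < η) (h1 : η ≤ 1/2) (w : ℝ) (hw : 0 ≤ w) {v : ℂ} (hv : CDir η v) 
    (c : ℝ) (hc : 0 < c) :
    CRay (fun s => Complex.exp s * s ^ (-(w:ℂ))) c v = 
      w * CRay (fun s => Complex.exp s * s ^ (-((w+1:ℝ):ℂ))) c v - Complex.exp c * c ^ (-(w:ℂ)) := by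
  have h := C_ftc h0 h1 (C_nice1 h0 h1 hw) hv c hc
  have hA := (C_int h0 h1 (C_nice1 h0 h1 hw) hv c hc).1
  have hB := (C_int h0 h1 (C_nice1 (w := w + 1) h0 h1 (by linarith)) hv c hc).1
  have h3 : CRay (fun s => Complex.exp s * s ^ (-(w:ℂ)) - w * (Complex.exp s * s ^ (-((w+1:ℝ):ℂ)))) c v
    = CRay (fun s => Complex.exp s * s ^ (-(w:ℂ))) c v - 
      w * CRay (fun s => Complex.exp s * s ^ (-((w+1:ℝ):ℂ))) c v := by
    unfold CRay
    rw [← integral_const_mul, ← integral_sub hA (hB.const_mul _)]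
    congr 1; ext r; ring
  rw [h3] at h
  linear_combination h

lemma C_rec {η : ℝ} (h0 : 0 < η) (h1 : η ≤ 1/2) (w : ℝ) (hw : 0 ≤ w)
    (c : ℝ) (hc : 0 < c) :
    CH η (fun s => Complex.exp s * s ^ (-(w:ℂ))) c = 
      w * CH η (fun s => Complex.exp s * s ^ (-((w+1:ℝ):ℂ))) c := by
  unfold CH
  rw [C_ray_sub h0 h1 w hw (Cv_dir h0 h1) c hc, C_ray_sub h0 h1 w hw (Cw_dir h0 h1) c hc]
  ring

lemma C_hankel_lt {η : ℝ} (h0 : 0 < η) (h1 : η ≤ 1/2) (w : ℝ) (hw : 0 ≤ w) (hw1 : w < 1)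
    (c : ℝ) (hc : 0 < c) :
    CH η (fun s => Complex.exp s * s ^ (-(w:ℂ))) c = 
      2 * Real.pi * Complex.I * (Complex.Gamma w)⁻¹ := by
  rw [← C_hankel00 h0 h1 hw hw1]
  apply C_move h0 h1 (C_nice1 h0 h1 hw) hw hw1 zero_le_one _ (Cv_dir h0 h1) (Cw_dir h0 h1) c hc
  intro s hs
  rw [norm_mul, Complex.norm_exp, ← Complex.ofReal_neg, Complex.norm_cpow_real, one_mul]

lemma C_wcont {η : ℝ} (h0 : 0 < η) (h1 : η ≤ 1/2) {v : ℂ} (hv : CDir η v) (c : ℝ) (hc : 0 < c) :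
    Tendsto (fun w : ℝ => CRay (fun s => Complex.exp s * s ^ (-(w:ℂ))) c v) (𝓝[<] 1)
      (𝓝 (CRay (fun s => Complex.exp s * s ^ (-((1:ℝ):ℂ))) c v)) := by
  unfold CRay
  apply tendsto_integral_filter_of_dominated_convergence
    (fun r => ((1 + 2/c) * Real.exp c) * Real.exp (-η * r))
  · filter_upwards [Ioo_mem_nhdsLT (show (0:ℝ) < 1 by norm_num)] with w hw
    exact (C_int h0 h1 (C_nice1 h0 h1 hw.1.le) hv c hc).1.aestronglyMeasurable
  · filter_upwards [Ioo_mem_nhdsLT (show (0:ℝ) < 1 by norm_num)] with w hw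
    filter_upwards [ae_restrict_mem measurableSet_Ioi] with r hr
    have hr : 0 < r := hr
    have hs := (hv.geo h0 h1 c r hc.le hr.le).1
    rw [norm_mul, hv.1, mul_one, norm_mul, Complex.norm_exp, ← Complex.ofReal_neg,
      Complex.norm_cpow_real, hv.re, mul_assoc, ← Real.exp_add, mul_comm]
    rw [show c + -η * r = c - η * r by ring]
    gcongr
    have h2 : ‖(c + r * v : ℂ)‖ ^ (-w) ≤ (c/2) ^ (-w) :=
      Real.rpow_le_rpow_of_nonpos (by positivity) hs (by linarith [hw.1])
    refine h2.trans ?_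
    rw [Real.rpow_neg (by positivity), ← Real.inv_rpow (by positivity), inv_div]
    have hx : 0 < 2 / c := by positivity
    rcases le_total (2/c) 1 with h | h
    · have := Real.rpow_le_one hx.le h hw.1.le
      linarith
    · have := Real.rpow_le_rpow_of_exponent_le h hw.2.le
      rw [Real.rpow_one] at this
      linarith
  · exact (C_int_exp0 h0).const_mul _
  · filter_upwards [ae_restrict_mem measurableSet_Ioi] with r hr
    have hr : 0 < r := hr
    have hne := (hv.reg h0 h1 c r hc.le hr.le (by linarith)).1
    apply Tendsto.mono_left _ nhdsWithin_le_nhds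
    have : ContinuousAt (fun w : ℝ => Complex.exp (c + r * v) * (c + r * v) ^ (-(w:ℂ)) * v) 1 := by
      apply ContinuousAt.mul _ continuousAt_const
      apply ContinuousAt.mul continuousAt_const
      apply ContinuousAt.const_cpow _ (Or.inl hne)
      fun_prop
    exact this

lemma C_hankel_one {η : ℝ} (h0 : 0 < η) (h1 : η ≤ 1/2) (c : ℝ) (hc : 0 < c) :
    CH η (fun s => Complex.exp s * s ^ (-((1:ℝ):ℂ))) c = 
      2 * Real.pi * Complex.I * (Complex.Gamma (1:ℝ))⁻¹ := by
  have ht := (C_wcont h0 h1 (Cv_dir h0 h1) c hc).sub (C_wcont h0 h1 (Cw_dir h0 h1) c hc)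
  refine tendsto_nhds_unique ht ?_
  have hc : ContinuousAt (fun w : ℝ => 2 * Real.pi * Complex.I * (Complex.Gamma (w:ℂ))⁻¹) 1 := by
    apply ContinuousAt.mul continuousAt_const
    have := Complex.differentiable_one_div_Gamma.continuous
    exact (this.comp Complex.continuous_ofReal).continuousAt
  refine Tendsto.congr' ?_ (hc.tendsto.mono_left nhdsWithin_le_nhds)
  filter_upwards [Ioo_mem_nhdsLT (show (0:ℝ) < 1 by norm_num)] with w hw
  exact (C_hankel_lt h0 h1 w hw.1.le hw.2 c (by assumption)).symm

lemma C_hankel {η : ℝ} (h0 : 0 < η) (h1 : η ≤ 1/2) (c : ℝ) (hc : 0 < c) (n : ℕ) :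
    ∀ w : ℝ, 0 < w → w ≤ n + 1 → 
    CH η (fun s => Complex.exp s * s ^ (-(w:ℂ))) c = 
      2 * Real.pi * Complex.I * (Complex.Gamma w)⁻¹ := by
  induction n with
  | zero =>
    intro w hw hw1
    simp at hw1
    rcases hw1.lt_or_eq with h | h
    · exact C_hankel_lt h0 h1 w hw.le h c hc
    · rw [h]; exact C_hankel_one h0 h1 c hc
  | succ n ih =>
    intro w hw hwn
    by_cases h : w ≤ 1
    · exact ih w hw (by have : (0:ℝ) ≤ n := n.cast_nonneg; linarith)
    · push Not at h
      have hr := C_rec h0 h1 (w - 1) (by linarith) c hc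
      rw [ih (w-1) (by linarith) (by push_cast at hwn; linarith)] at hr
      have hne : ((w - 1 : ℝ) : ℂ) ≠ 0 := by
        have : w - 1 ≠ 0 := by linarith
        exact_mod_cast this
      have hG := Complex.Gamma_add_one _ hne
      rw [show ((w - 1 : ℝ) : ℂ) + 1 = w by push_cast; ring] at hG
      rw [show w - 1 + 1 = w by ring] at hr
      rw [hG, mul_inv]
      apply mul_left_cancel₀ hne
      rw [← hr]
      field_simp

lemma C_pow_re {η β : ℝ} (hβ0 : 0 ≤ β) (hβ1 : β ≤ 1) {s : ℂ} (hs : CReg η s) :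
    -η * ‖s ^ (β:ℂ)‖ ≤ (s ^ (β:ℂ)).re := by
  rw [Complex.norm_cpow_real, Complex.cpow_ofReal_re]
  have hp : 0 < ‖s‖ := norm_pos_iff.2 hs.1
  have h1 : Real.cos (Complex.arg s) ≤ Real.cos (Complex.arg s * β) := by
    rw [← Real.cos_abs (Complex.arg s), ← Real.cos_abs (Complex.arg s * β)]
    apply Real.cos_le_cos_of_nonneg_of_le_pi (abs_nonneg _) (Complex.abs_arg_le_pi _)
    rw [abs_mul, abs_of_nonneg hβ0]
    nlinarith [abs_nonneg (Complex.arg s)]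
  have h2 : -η ≤ Real.cos (Complex.arg s) := by
    rw [Complex.cos_arg hs.1, le_div_iff₀ hp]; exact hs.2
  have h3 : 0 ≤ ‖s‖ ^ β := by positivity
  nlinarith

lemma C_sep {η : ℝ} (h0 : 0 < η) (h1 : η ≤ 1/2) {u z : ℂ} (hu : -η * ‖u‖ ≤ u.re)
    (hz : z.re ≤ -(2 * η) * ‖z‖) : η / 3 * ‖z‖ ≤ ‖u - z‖ ∧ η / 3 * ‖u‖ ≤ ‖u - z‖ := by
  have ha : u.re - z.re ≤ ‖u - z‖ := by
    have := Complex.re_le_norm (u - z)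
    simpa using this
  have hb : ‖u‖ - ‖z‖ ≤ ‖u - z‖ := norm_sub_norm_le _ _
  have hn := norm_nonneg (u - z)
  have hnz := norm_nonneg z
  have h2 : η * ‖z‖ ≤ (1 + η) * ‖u - z‖ := by nlinarith
  constructor
  · nlinarith
  · nlinarith

/-- The integrand. -/
noncomputable def Ch (β : ℝ) (z s : ℂ) : ℂ :=
  Complex.exp s * s ^ (-((1 - β : ℝ) : ℂ)) / (s ^ (β:ℂ) - z)

lemma Ch_ne {η β : ℝ} (h0 : 0 < η) (h1 : η ≤ 1/2) (hβ0 : 0 < β) (hβ1 : β ≤ 1) {z : ℂ} 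
    (hz0 : z ≠ 0) (hz : z.re ≤ -(2 * η) * ‖z‖) {s : ℂ} (hs : CReg η s) : s ^ (β:ℂ) - z ≠ 0 := by
  have := (C_sep h0 h1 (C_pow_re hβ0.le hβ1 hs) hz).1
  have hp : 0 < ‖z‖ := norm_pos_iff.2 hz0
  rw [← norm_pos_iff]
  have : 0 < η / 3 * ‖z‖ := by positivity
  linarith

lemma Ch_bd {η β : ℝ} (h0 : 0 < η) (h1 : η ≤ 1/2) (hβ0 : 0 < β) (hβ1 : β ≤ 1) {z : ℂ} 
    (hz0 : z ≠ 0) (hz : z.re ≤ -(2 * η) * ‖z‖) {s : ℂ} (hs : CReg η s) : 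
    ‖Ch β z s‖ ≤ (η / 3 * ‖z‖)⁻¹ * Real.exp s.re * ‖s‖ ^ (-(1 - β)) := by
  have := (C_sep h0 h1 (C_pow_re hβ0.le hβ1 hs) hz).1
  have hp : 0 < ‖z‖ := norm_pos_iff.2 hz0
  unfold Ch
  rw [norm_div, norm_mul, Complex.norm_exp, ← Complex.ofReal_neg, Complex.norm_cpow_real,
    div_eq_mul_inv, mul_comm, mul_assoc]
  gcongr

lemma Ch_nice {η β : ℝ} (h0 : 0 < η) (h1 : η ≤ 1/2) (hβ0 : 0 < β) (hβ1 : β ≤ 1) {z : ℂ} 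
    (hz0 : z ≠ 0) (hz : z.re ≤ -(2 * η) * ‖z‖) : 
    CNice η (Ch β z) (fun s => Ch β z s * (1 - (1 - β : ℝ) / s - 
      β * s ^ (-((1 - β : ℝ) : ℂ)) / (s ^ (β:ℂ) - z))) := by
  have hder : ∀ s, CReg η s → HasDerivAt (Ch β z) (Ch β z s * (1 - (1 - β : ℝ) / s - 
      β * s ^ (-((1 - β : ℝ) : ℂ)) / (s ^ (β:ℂ) - z))) s := by
    intro s hs
    have hsl := hs.slit (by linarith)
    have hne := Ch_ne h0 h1 hβ0 hβ1 hz0 hz hs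
    have hA := (hasDerivAt_id s).cpow_const (c := -((1 - β : ℝ) : ℂ)) hsl
    have hB := ((hasDerivAt_id s).cpow_const (c := (β : ℂ)) hsl).sub_const z
    have h := (((Complex.hasDerivAt_exp s).mul hA).div hB hne)
    refine h.congr_deriv ?_
    have e1 : s ^ (-((1 - β : ℝ) : ℂ) - 1) = s ^ (-((1 - β : ℝ) : ℂ)) / s := by
      rw [Complex.cpow_sub _ _ hs.1, Complex.cpow_one]
    have e2 : s ^ ((β:ℂ) - 1) = s ^ (-((1 - β : ℝ) : ℂ)) := by
      congr 1; push_cast; ring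
    have hs0 := hs.1
    simp only [id, Ch, e1, e2, Pi.mul_apply]
    field_simp
    ring
  refine ⟨hder, ?_, ?_⟩
  · intro s hs
    have hsl := hs.slit (by linarith)
    have h2 : ∀ c : ℂ, ContinuousAt (fun s : ℂ => s ^ c) s := fun c =>
      continuousAt_id.cpow continuousAt_const hsl
    have hne := Ch_ne h0 h1 hβ0 hβ1 hz0 hz hs
    have hs0 := hs.1
    have ha := (hder s hs).continuousAt
    have hb := h2 (-((1 - β : ℝ) : ℂ))
    have hc := h2 (β:ℂ)
    apply ha.mul
    apply ContinuousAt.sub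
    · exact continuousAt_const.sub (continuousAt_const.div continuousAt_id hs0)
    · exact (continuousAt_const.mul hb).div (hc.sub continuousAt_const) hne
  · intro ρ hρ
    have hp : 0 < ‖z‖ := norm_pos_iff.2 hz0
    set A := (η / 3 * ‖z‖)⁻¹ * ρ ^ (-(1-β)) with hA
    have hA0 : 0 ≤ A := by positivity
    set B := 1 + ρ⁻¹ + (η / 3)⁻¹ * ρ⁻¹ with hB
    have hB1 : 1 ≤ B := by
      have : 0 ≤ ρ⁻¹ + (η / 3)⁻¹ * ρ⁻¹ := by positivity
      linarith
    refine ⟨A * B, by positivity, ?_⟩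
    intro s hs hsρ
    have hs0 : 0 < ‖s‖ := norm_pos_iff.2 hs.1
    have hg : ‖Ch β z s‖ ≤ A * Real.exp s.re := by
      refine (Ch_bd h0 h1 hβ0 hβ1 hz0 hz hs).trans ?_
      rw [hA, mul_right_comm]
      gcongr ?_ * _
      gcongr _ * ?_
      exact Real.rpow_le_rpow_of_nonpos hρ hsρ (by linarith)
    have hinv : ‖s‖⁻¹ ≤ ρ⁻¹ := inv_anti₀ hρ hsρ
    refine ⟨hg.trans ?_, ?_⟩
    · rw [mul_right_comm A]
      apply le_mul_of_one_le_right _ hB1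
      positivity
    · rw [norm_mul, mul_right_comm]
      gcongr
      refine (norm_sub_le _ _).trans ?_
      rw [hB]
      gcongr
      · refine (norm_sub_le _ _).trans ?_
        rw [norm_one, norm_div, Complex.norm_real, Real.norm_of_nonneg (by linarith)]
        gcongr
        rw [div_eq_mul_inv]
        have : 0 ≤ ‖s‖⁻¹ := by positivity
        nlinarith
      · have hsep := (C_sep h0 h1 (C_pow_re hβ0.le hβ1 hs) hz).2
        have e2 : s ^ (-((1 - β : ℝ) : ℂ)) = s ^ (β:ℂ) / s := by
          rw [show (-((1 - β : ℝ) : ℂ)) = β - 1 by push_cast; ring, Complex.cpow_sub _ _ hs.1,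
            Complex.cpow_one]
        have hd : 0 < ‖s ^ (β:ℂ) - z‖ := norm_pos_iff.2 (Ch_ne h0 h1 hβ0 hβ1 hz0 hz hs)
        rw [e2, norm_div, norm_mul, norm_div, Complex.norm_real, Real.norm_of_nonneg hβ0.le]
        have h5 : ‖s ^ (β:ℂ)‖ / ‖s ^ (β:ℂ) - z‖ ≤ (η / 3)⁻¹ := by
          rw [div_le_iff₀ hd, ← div_eq_inv_mul, le_div_iff₀ (by positivity)]
          linarith
        calc β * (‖s ^ (β:ℂ)‖ / ‖s‖) / ‖s ^ (β:ℂ) - z‖ 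
            = β * ((‖s ^ (β:ℂ)‖ / ‖s ^ (β:ℂ) - z‖) * ‖s‖⁻¹) := by field_simp
          _ ≤ 1 * ((η / 3)⁻¹ * ρ⁻¹) := by gcongr
          _ = _ := one_mul _

lemma C_hasSum {η β : ℝ} (h0 : 0 < η) (h1 : η ≤ 1/2) (hβ0 : 0 < β) {z : ℂ} {v : ℂ}
    (hv : CDir η v) {c : ℝ} (hc : 0 < c) (hcz : 2 * ‖z‖ ≤ (c / 2) ^ β) :
    HasSum (fun k : ℕ => z ^ k * CRay (fun s => Complex.exp s * s ^ (-((β * k + 1 : ℝ) : ℂ))) c v)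
      (CRay (Ch β z) c v) := by
  unfold CRay
  simp_rw [← integral_const_mul]
  apply hasSum_integral_of_dominated_convergence
    (fun (k : ℕ) (r : ℝ) => (1/2 : ℝ) ^ k * ((2 / c) * Real.exp c * Real.exp (-η * r)))
  · intro k
    exact ((C_int h0 h1 (C_nice1 (w := β * k + 1) h0 h1 (by positivity)) hv c hc).1.const_mul
      _).aestronglyMeasurable
  · intro k
    filter_upwards [ae_restrict_mem measurableSet_Ioi] with r hr
    have hr : 0 < r := hr
    have hs := (hv.geo h0 h1 c r hc.le hr.le).1
    have hs0 : 0 < ‖(c + r * v : ℂ)‖ := lt_of_lt_of_le (by positivity) hs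
    rw [norm_mul, norm_mul, hv.1, mul_one, norm_mul, Complex.norm_exp, ← Complex.ofReal_neg,
      Complex.norm_cpow_real, hv.re, norm_pow, Real.rpow_neg hs0.le, Real.rpow_add_one hs0.ne', 
      Real.rpow_mul hs0.le, Real.rpow_natCast]
    have hb : (c/2) ^ β ≤ ‖(c + r * v : ℂ)‖ ^ β := Real.rpow_le_rpow (by positivity) hs hβ0.le
    have hb0 : 0 < (c/2) ^ β := by positivity
    set X := ‖(c + r * v : ℂ)‖ with hX
    have hq : ‖z‖ / X ^ β ≤ 1/2 := by
      rw [div_le_iff₀ (by linarith)]; linarith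
    have hi : X⁻¹ ≤ 2 / c := by
      rw [← inv_div]; exact inv_anti₀ (by positivity) hs
    calc ‖z‖ ^ k * (Real.exp (c - η * r) * ((X ^ β) ^ k * X)⁻¹) 
        = (‖z‖ / X ^ β) ^ k * (X⁻¹ * Real.exp (c - η * r)) := by
          rw [mul_inv, div_pow]; ring
      _ ≤ (1/2) ^ k * ((2 / c) * Real.exp (c - η * r)) := by gcongr
      _ = _ := by rw [mul_assoc (2/c), ← Real.exp_add]; ring_nf
  · refine Eventually.of_forall fun r => ?_
    exact (summable_geometric_of_lt_one (by norm_num) (by norm_num)).mul_right _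
  · simp_rw [tsum_mul_right]
    exact ((C_int_exp0 h0).const_mul _).const_mul _
  · filter_upwards [ae_restrict_mem measurableSet_Ioi] with r hr
    have hr : 0 < r := hr
    have hs := (hv.geo h0 h1 c r hc.le hr.le).1
    have hs0 : 0 < ‖(c + r * v : ℂ)‖ := lt_of_lt_of_le (by positivity) hs
    have hb : (c/2) ^ β ≤ ‖(c + r * v : ℂ)‖ ^ β := Real.rpow_le_rpow (by positivity) hs hβ0.le
    have hb0 : 0 < (c/2) ^ β := by positivity
    set s := (c + r * v : ℂ) with hsdef
    have hsne : s ≠ 0 := norm_pos_iff.1 hs0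
    have hpne : s ^ (β:ℂ) ≠ 0 := by
      rw [← norm_pos_iff, Complex.norm_cpow_real]; linarith
    have hq : ‖z / s ^ (β:ℂ)‖ < 1 := by
      rw [norm_div, Complex.norm_cpow_real, div_lt_one (by linarith)]; linarith [norm_nonneg z]
    have hsum := (hasSum_geometric_of_norm_lt_one hq).mul_left (Complex.exp s * s⁻¹ * v)
    have hdne : s ^ (β:ℂ) - z ≠ 0 := by
      intro h
      rw [sub_eq_zero] at h
      rw [← h, div_self hpne] at hq
      simp at hq
    have k1 : ∀ k : ℕ, z ^ k * (Complex.exp s * s ^ (-((β * k + 1 : ℝ) : ℂ)) * v) =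
        Complex.exp s * s⁻¹ * v * (z / s ^ (β:ℂ)) ^ k := by
      intro k
      have : s ^ (-((β * k + 1 : ℝ) : ℂ)) = ((s ^ (β:ℂ)) ^ k)⁻¹ * s⁻¹ := by
        rw [Complex.cpow_neg]
        push_cast
        rw [Complex.cpow_add _ _ hsne, Complex.cpow_one, Complex.cpow_mul_nat, mul_inv]
      rw [this, div_pow]
      field_simp
    have k2 : Ch β z s * v = Complex.exp s * s⁻¹ * v * (1 - z / s ^ (β:ℂ))⁻¹ := by
      have e2 : s ^ (-((1 - β : ℝ) : ℂ)) = s ^ (β:ℂ) / s := by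
        rw [show (-((1 - β : ℝ) : ℂ)) = β - 1 by push_cast; ring, Complex.cpow_sub _ _ hsne,
          Complex.cpow_one]
      have hd2 : 1 - z / s ^ (β:ℂ) ≠ 0 := by
        rw [one_sub_div hpne]; exact div_ne_zero hdne hpne
      rw [Ch, e2, one_sub_div hpne]
      field_simp
    rw [k2]
    simp only [k1]
    exact hsum

lemma C_ml {η β : ℝ} (h0 : 0 < η) (h1 : η ≤ 1/2) (hβ0 : 0 < β) (hβ1 : β ≤ 1) {z : ℂ} 
    (hz0 : z ≠ 0) (hz : z.re ≤ -(2 * η) * ‖z‖) : 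
    2 * Real.pi * Complex.I * mittagLeffler β z = CH η (Ch β z) 0 := by
  obtain ⟨c, hc, hcz⟩ : ∃ c : ℝ, 0 < c ∧ 2 * ‖z‖ ≤ (c / 2) ^ β := by
    have hp : 0 < ‖z‖ := norm_pos_iff.2 hz0
    refine ⟨2 * (2 * ‖z‖) ^ (1 / β), by positivity, ?_⟩
    rw [mul_div_cancel_left₀ _ two_ne_zero, ← Real.rpow_mul (by positivity),
      one_div_mul_cancel hβ0.ne', Real.rpow_one]
  have hmove : CH η (Ch β z) c = CH η (Ch β z) 0 :=
    C_move h0 h1 (Ch_nice h0 h1 hβ0 hβ1 hz0 hz) (a := 1 - β) (by linarith) (by linarith)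
      (C := (η / 3 * ‖z‖)⁻¹) (by positivity)
      (fun s hs => Ch_bd h0 h1 hβ0 hβ1 hz0 hz hs) (Cv_dir h0 h1) (Cw_dir h0 h1) c hc
  rw [← hmove]
  have hs := (C_hasSum h0 h1 hβ0 (Cv_dir h0 h1) hc hcz).sub
    (C_hasSum h0 h1 hβ0 (Cw_dir h0 h1) hc hcz)
  have hs2 : HasSum (fun k : ℕ => 2 * Real.pi * Complex.I * (z ^ k / Complex.Gamma (β * k + 1)))
      (CH η (Ch β z) c) := by
    have hfun : ∀ k : ℕ, 2 * Real.pi * Complex.I * (z ^ k / Complex.Gamma (β * k + 1)) =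
        z ^ k * CRay (fun s => Complex.exp s * s ^ (-((β * k + 1 : ℝ) : ℂ))) c (Cv η) -
        z ^ k * CRay (fun s => Complex.exp s * s ^ (-((β * k + 1 : ℝ) : ℂ))) c (Cw η) := ?_
    · simp only [hfun]; exact hs
    intro k
    have hk : (0:ℝ) < β * k + 1 := by positivity
    obtain ⟨n, hn⟩ := exists_nat_ge (β * k + 1)
    have := C_hankel h0 h1 c hc n (β * k + 1) hk (by linarith)
    rw [← mul_sub]
    unfold CH at this
    rw [this]
    push_cast
    ring
  rw [mittagLeffler, ← tsum_mul_left, hs2.tsum_eq]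

lemma C_gamma_slope {x y : ℝ} (hy : 0 ≤ y) (hyx : y < x) (hx : x < 1) :
    (1 - Real.log 2) * (x - y) ≤ (Real.Gamma x)⁻¹ - (Real.Gamma y)⁻¹ := by
  have hc := Real.convexOn_log_Gamma
  have hx0 : 0 < x := by linarith
  have hG2 : Real.Gamma 2 = 1 := by simp
  have hG3 : Real.Gamma 3 = 2 := by
    rw [show (3:ℝ) = 2 + 1 by norm_num, Real.Gamma_add_one two_ne_zero, hG2, mul_one]
  have s1 := hc.slope_mono_adjacent (x := 1 + y) (y := 1 + x) (z := 2)
    (by simp; linarith) (by simp) (by linarith) (by linarith)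
  have s2 := hc.slope_mono_adjacent (x := 1 + x) (y := 2) (z := 3)
    (by simp; linarith) (by simp) (by linarith) (by linarith)
  have s3 := s1.trans s2
  simp only [Function.comp, hG2, hG3, Real.log_one] at s3
  rw [show (3:ℝ) - 2 = 1 by norm_num, div_one, div_le_iff₀ (by linarith)] at s3
  have hgx : 0 < Real.Gamma (1 + x) := Real.Gamma_pos_of_pos (by linarith)
  have hgy : 0 < Real.Gamma (1 + y) := Real.Gamma_pos_of_pos (by linarith)
  have hle : Real.log (Real.Gamma (1 + y)) ≤ 0 := by
    have := hc.2 (show (1:ℝ) ∈ Ioi 0 by simp) (show (2:ℝ) ∈ Ioi 0 by simp)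
      (show 0 ≤ 1 - y by linarith) hy (by ring)
    simp only [Function.comp, hG2, Real.Gamma_one, Real.log_one, smul_eq_mul] at this
    rw [show (1 - y) * 1 + y * 2 = 1 + y by ring] at this
    linarith
  have hgy1 : Real.Gamma (1 + y) ≤ 1 := by
    rw [← Real.log_nonpos_iff hgy.le]; exact hle
  have hinv : ∀ a : ℝ, 0 ≤ a → (Real.Gamma a)⁻¹ = a / Real.Gamma (1 + a) := by
    intro a ha
    rcases ha.eq_or_lt with h | h
    · rw [← h]; simp
    · rw [add_comm, Real.Gamma_add_one h.ne']
      have := Real.Gamma_pos_of_pos h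
      field_simp
  rw [hinv x hx0.le, hinv y hy]
  set l := Real.log 2 with hl
  have hl0 : 0 < l := Real.log_pos (by norm_num)
  have hl1 : l < 1 := by have := Real.log_two_lt_d9; linarith
  have hexp : Real.Gamma (1 + x) ≤ Real.Gamma (1 + y) * Real.exp (l * (x - y)) := by
    rw [← Real.exp_log hgx]
    rw [show Real.Gamma (1 + y) = Real.exp (Real.log (Real.Gamma (1 + y))) from
      (Real.exp_log hgy).symm, ← Real.exp_add]
    apply Real.exp_le_exp.2
    linarith
  have h1 : x * Real.exp (-(l * (x - y))) / Real.Gamma (1 + y) ≤ x / Real.Gamma (1 + x) := by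
    rw [div_le_div_iff₀ hgy hgx]
    rw [mul_assoc]
    gcongr
    rw [Real.exp_neg, inv_mul_le_iff₀ (Real.exp_pos _)]
    linarith
  have h2 : x * (1 - l * (x - y)) ≤ x * Real.exp (-(l * (x - y))) := by
    gcongr
    have := Real.add_one_le_exp (-(l * (x - y)))
    linarith
  have h3 : (1 - l) * (x - y) ≤ x * Real.exp (-(l * (x - y))) - y := by
    have : 0 ≤ l * ((x - y) * (1 - x)) := by
      apply mul_nonneg hl0.le; apply mul_nonneg <;> linarith
    nlinarith
  calc (1 - l) * (x - y) ≤ (1 - l) * (x - y) / Real.Gamma (1 + y) := by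
        rw [le_div_iff₀ hgy]
        have : 0 ≤ (1 - l) * (x - y) := by apply mul_nonneg <;> linarith
        nlinarith
    _ ≤ (x * Real.exp (-(l * (x - y))) - y) / Real.Gamma (1 + y) := by gcongr
    _ ≤ _ := by rw [sub_div]; linarith

lemma C_mul_cpow {r : ℝ} (hr : 0 < r) {v : ℂ} (hv0 : v ≠ 0) (a : ℂ) :
    (r * v : ℂ) ^ a = (r:ℂ) ^ a * v ^ a := by
  rw [Complex.cpow_def_of_ne_zero (by simp [hr.ne', hv0]),
    Complex.cpow_def_of_ne_zero (by simp [hr.ne']), Complex.cpow_def_of_ne_zero hv0,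
    Complex.log_ofReal_mul hr hv0, ← Complex.exp_add, Complex.ofReal_log hr.le]
  ring_nf

/-- remainder kernel -/
noncomputable def Cq (l x : ℂ) (β : ℝ) : ℂ := (x ^ (β:ℂ)) ^ 2 / (x ^ (β:ℂ) - l)

/-- remainder integrand -/
noncomputable def CD (l : ℂ) (t β : ℝ) (s : ℂ) : ℂ :=
  Complex.exp s * s⁻¹ * Cq l (((t⁻¹ : ℝ) : ℂ) * s) β

lemma CReg.smul {η : ℝ} {s : ℂ} (hs : CReg η s) {t : ℝ} (ht : 0 < t) : CReg η ((t:ℂ) * s) := by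
  refine ⟨mul_ne_zero (by simp [ht.ne']) hs.1, ?_⟩
  rw [norm_mul, Complex.norm_real, Real.norm_of_nonneg ht.le, Complex.re_ofReal_mul]
  have := hs.2
  nlinarith

lemma CD_eq {η β : ℝ} (h0 : 0 < η) (h1 : η ≤ 1/2) (hβ0 : 0 < β) (hβ1 : β ≤ 1) {l : ℂ} 
    (hl0 : l ≠ 0) (hl : l.re ≤ -(2 * η) * ‖l‖) {t : ℝ} (ht : 0 < t) {s : ℂ} (hs : CReg η s) :
    CD l t β s = ((t ^ (-β) : ℝ) : ℂ) * (Complex.exp s * s ^ (-((1 - β : ℝ) : ℂ))) + 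
      l * Ch β (l * ((t ^ β : ℝ) : ℂ)) s := by
  have hti : 0 < t⁻¹ := by positivity
  have hne : (((t⁻¹ : ℝ) : ℂ) * s) ^ (β:ℂ) - l ≠ 0 := Ch_ne h0 h1 hβ0 hβ1 hl0 hl (hs.smul hti)
  have hs0 := hs.1
  have e2 : s ^ (-((1 - β : ℝ) : ℂ)) = s ^ (β:ℂ) / s := by
    rw [show (-((1 - β : ℝ) : ℂ)) = β - 1 by push_cast; ring, Complex.cpow_sub _ _ hs0,
      Complex.cpow_one]
  have htb : 0 < t ^ β := by positivity
  have e3 : (((t⁻¹ : ℝ) : ℂ) * s) ^ (β:ℂ) = (((t ^ β : ℝ) : ℂ))⁻¹ * s ^ (β:ℂ) := by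
    rw [C_mul_cpow hti hs0, ← Complex.ofReal_cpow hti.le, Real.inv_rpow ht.le]; push_cast; rfl
  have e4 : ((t ^ (-β) : ℝ) : ℂ) = (((t ^ β : ℝ) : ℂ))⁻¹ := by
    rw [Real.rpow_neg ht.le]; push_cast; rfl
  rw [CD, Cq, Ch, e2, e4]
  rw [e3] at hne ⊢
  have hT : ((t ^ β : ℝ) : ℂ) ≠ 0 := by exact_mod_cast htb.ne'
  generalize ((t ^ β : ℝ) : ℂ) = T at *
  generalize s ^ (β:ℂ) = S at *
  have hne2 : S - l * T ≠ 0 := by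
    intro h; apply hne
    rw [sub_eq_zero] at h ⊢
    rw [h]; field_simp
  have e5 : T⁻¹ * S - l = (S - l * T) / T := by field_simp
  rw [e5]
  obtain ⟨d, hd⟩ : ∃ d, d = S - l * T := ⟨_, rfl⟩
  have hS : S = d + l * T := by rw [hd]; ring
  rw [← hd] at hne2 ⊢
  rw [hS]
  field_simp

lemma Cz {η : ℝ} {l : ℂ} (hl0 : l ≠ 0) (hl : l.re ≤ -(2 * η) * ‖l‖) {T : ℝ} (hT : 0 < T) :
    l * (T : ℂ) ≠ 0 ∧ (l * (T:ℂ)).re ≤ -(2 * η) * ‖l * (T:ℂ)‖ := by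
  refine ⟨mul_ne_zero hl0 (by simp [hT.ne']), ?_⟩
  rw [norm_mul, Complex.norm_real, Real.norm_of_nonneg hT.le, Complex.re_mul_ofReal]
  nlinarith

lemma C_ray_decomp {η β : ℝ} (h0 : 0 < η) (h1 : η ≤ 1/2) (hβ0 : 0 < β) (hβ1 : β ≤ 1) {l : ℂ} 
    (hl0 : l ≠ 0) (hl : l.re ≤ -(2 * η) * ‖l‖) {t : ℝ} (ht : 0 < t) {v : ℂ} (hv : CDir η v) :
    IntegrableOn (fun r : ℝ => CD l t β ((0:ℝ) + r * v) * v) (Ioi 0) ∧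
    CRay (CD l t β) 0 v = ((t ^ (-β) : ℝ) : ℂ) * 
      CRay (fun s => Complex.exp s * s ^ (-((1 - β : ℝ) : ℂ))) 0 v + 
      l * CRay (Ch β (l * ((t ^ β : ℝ) : ℂ))) 0 v := by
  have htb : 0 < t ^ β := by positivity
  obtain ⟨hz0, hz⟩ := Cz hl0 hl htb
  have hA := C_int0 h0 h1 (a := 1 - β) (by linarith) (by linarith) zero_le_one 
    (fun s hs => ((C_nice1 (w := 1 - β) h0 h1 (by linarith)).der s hs).continuousAt)
    (by 
      intro s hs
      rw [norm_mul, Complex.norm_exp, ← Complex.ofReal_neg, Complex.norm_cpow_real, one_mul])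
    hv 0 le_rfl zero_le_one
  have hB := C_int0 h0 h1 (a := 1 - β) (by linarith) (by linarith) 
    (C := (η / 3 * ‖l * ((t ^ β : ℝ) : ℂ)‖)⁻¹) (by positivity)
    (fun s hs => ((Ch_nice h0 h1 hβ0 hβ1 hz0 hz).der s hs).continuousAt)
    (fun s hs => Ch_bd h0 h1 hβ0 hβ1 hz0 hz hs) hv 0 le_rfl zero_le_one
  have hAB := (hA.const_mul ((t ^ (-β) : ℝ) : ℂ)).add (hB.const_mul l)
  have hcongr : ∀ r ∈ Ioi (0:ℝ), CD l t β ((0:ℝ) + r * v) * v = 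
      ((t ^ (-β) : ℝ) : ℂ) * ((Complex.exp ((0:ℝ) + r * v) * 
        ((0:ℝ) + r * v) ^ (-((1 - β : ℝ) : ℂ))) * v) + 
      l * (Ch β (l * ((t ^ β : ℝ) : ℂ)) ((0:ℝ) + r * v) * v) := by
    intro r hr
    have hr : 0 < r := hr
    rw [CD_eq h0 h1 hβ0 hβ1 hl0 hl ht (hv.reg h0 h1 0 r le_rfl hr.le (by linarith))]
    ring
  constructor
  · exact IntegrableOn.congr_fun hAB (fun r hr => (hcongr r hr).symm) measurableSet_Ioi
  · unfold CRay
    rw [setIntegral_congr_fun measurableSet_Ioi hcongr, 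
      integral_add (hA.const_mul _) (hB.const_mul _), integral_const_mul, integral_const_mul]

lemma C_decomp {η β : ℝ} (h0 : 0 < η) (h1 : η ≤ 1/2) (hβ0 : 0 < β) (hβ1 : β ≤ 1) {l : ℂ} 
    (hl0 : l ≠ 0) (hl : l.re ≤ -(2 * η) * ‖l‖) {t : ℝ} (ht : 0 < t) :
    CH η (CD l t β) 0 = 2 * Real.pi * Complex.I * 
      (((t ^ (-β) * (Real.Gamma (1 - β))⁻¹ : ℝ) : ℂ) + 
        l * mittagLeffler β (l * ((t ^ β : ℝ) : ℂ))) := by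
  have htb : 0 < t ^ β := by positivity
  obtain ⟨hz0, hz⟩ := Cz hl0 hl htb
  have hA := (C_ray_decomp h0 h1 hβ0 hβ1 hl0 hl ht (Cv_dir h0 h1)).2
  have hB := (C_ray_decomp h0 h1 hβ0 hβ1 hl0 hl ht (Cw_dir h0 h1)).2
  have hH := C_hankel00 (w := 1 - β) h0 h1 (by linarith) (by linarith)
  have hM := C_ml h0 h1 hβ0 hβ1 hz0 hz
  rw [Complex.Gamma_ofReal] at hH
  unfold CH at *
  rw [hA, hB]
  push_cast at *
  linear_combination ((t ^ (-β) : ℝ) : ℂ) * hH - l * hM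

lemma Cq_lip {η : ℝ} (h0 : 0 < η) (h1 : η ≤ 1/2) {l : ℂ} 
    (hl0 : l ≠ 0) (hl : l.re ≤ -(2 * η) * ‖l‖) {x : ℂ} (hx : CReg η x) {β β' A : ℝ}
    (hβ0 : 0 < β) (hββ : β ≤ β') (hβ1 : β' ≤ 1) 
    (hA : ∀ ξ ∈ Icc β β', (‖x‖ ^ ξ) ^ 2 ≤ A) :
    ‖Cq l x β' - Cq l x β‖ ≤ 
      (‖Complex.log x‖ * (A * ((2 + (η/3)⁻¹) * (η / 3 * ‖l‖)⁻¹))) * (β' - β) := by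
  have hp : 0 < ‖l‖ := norm_pos_iff.2 hl0
  have := norm_image_sub_le_of_norm_deriv_le_segment' (f := Cq l x) (a := β) (b := β')
    (C := ‖Complex.log x‖ * (A * ((2 + (η/3)⁻¹) * (η / 3 * ‖l‖)⁻¹)))
    (f' := fun ξ : ℝ => Complex.log x * (2 * (x ^ (ξ:ℂ)) ^ 2 / (x ^ (ξ:ℂ) - l) - 
      (x ^ (ξ:ℂ)) ^ 3 / (x ^ (ξ:ℂ) - l) ^ 2)) ?_ ?_ β' ⟨hββ, le_rfl⟩
  · exact this
  · intro ξ hξ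
    have hne : x ^ (ξ:ℂ) - l ≠ 0 := Ch_ne h0 h1 (by linarith [hξ.1]) (by linarith [hξ.2]) hl0 hl hx
    apply HasDerivAt.hasDerivWithinAt
    have hu : HasDerivAt (fun ξ : ℝ => x ^ (ξ:ℂ)) (x ^ (ξ:ℂ) * Complex.log x) ξ := by
      have := ((hasDerivAt_id (ξ:ℂ)).const_cpow (c := x) (Or.inl hx.1)).comp_ofReal
      simpa using this
    have h := (hu.pow 2).div (hu.sub_const l) hne
    refine h.congr_deriv ?_
    simp only [Pi.pow_apply]
    field_simp
    ring
  · intro ξ hξ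
    have hξ0 : 0 < ξ := by linarith [hξ.1]
    have hξ1 : ξ ≤ 1 := by linarith [hξ.2]
    have hne : x ^ (ξ:ℂ) - l ≠ 0 := Ch_ne h0 h1 hξ0 hξ1 hl0 hl hx
    obtain ⟨ha, hb⟩ := C_sep h0 h1 (C_pow_re hξ0.le hξ1 hx) hl
    have hd : 0 < ‖x ^ (ξ:ℂ) - l‖ := norm_pos_iff.2 hne
    have hAx := hA ξ ⟨hξ.1, hξ.2.le⟩
    rw [← Complex.norm_cpow_real] at hAx
    set u := x ^ (ξ:ℂ) with hu
    rw [norm_mul]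
    gcongr
    have e : 2 * u ^ 2 / (u - l) - u ^ 3 / (u - l) ^ 2 = u ^ 2 * ((2 - u / (u - l)) * (u - l)⁻¹) := by
      field_simp
    rw [e, norm_mul, norm_mul, norm_pow, norm_inv]
    have hA0 : 0 ≤ A := le_trans (by positivity) hAx
    gcongr
    refine (norm_sub_le _ _).trans ?_
    rw [norm_div]
    gcongr
    · simp
    · rw [div_le_iff₀ hd, ← div_eq_inv_mul, le_div_iff₀ (by positivity)]
      linarith

/-- dominating weight -/
noncomputable def CW (η b r : ℝ) : ℝ :=
  (4 * r ^ (2*b-1) + 4 * r ^ (1:ℝ) + r ^ (2*b) + r ^ (2:ℝ) + b⁻¹ * r ^ (b-1) + b⁻¹ * r ^ (1-b)) *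
    Real.exp (-η * r)

lemma CW_int {η b : ℝ} (h0 : 0 < η) (hb0 : 0 < b) (hb1 : b < 1) : 
    IntegrableOn (CW η b) (Ioi 0) := by
  have h := fun a ha => C_int_exp h0 a ha
  have := ((((((h (2*b-1) (by linarith)).const_mul 4).add ((h 1 (by linarith)).const_mul 4)).add
    (h (2*b) (by linarith))).add (h 2 (by linarith))).add 
    ((h (b-1) (by linarith)).const_mul b⁻¹)).add ((h (1-b) (by linarith)).const_mul b⁻¹)
  refine IntegrableOn.congr_fun this (fun r hr => ?_) measurableSet_Ioi
  simp only [Pi.add_apply, CW]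
  ring

lemma C_log_bd {b r : ℝ} (hb0 : 0 < b) (hr : 0 < r) : |Real.log r| ≤ r + b⁻¹ * r ^ (-b) := by
  have h1 : Real.log r ≤ r := by have := Real.log_le_sub_one_of_pos hr; linarith
  have h2 := Real.log_le_rpow_div (x := r⁻¹) (by positivity) hb0
  rw [Real.log_inv, Real.inv_rpow hr.le, ← Real.rpow_neg hr.le, div_eq_inv_mul] at h2
  have h3 : 0 < b⁻¹ * r ^ (-b) := by positivity
  rw [abs_le]; constructor <;> linarith

lemma CD_lip {η b : ℝ} (h0 : 0 < η) (h1 : η ≤ 1/2) (hb0 : 0 < b) {l : ℂ} 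
    (hl0 : l ≠ 0) (hl : l.re ≤ -(2 * η) * ‖l‖) {t : ℝ} (ht : 1 ≤ t) {v : ℂ} (hv : CDir η v)
    {β β' : ℝ} (hβ0 : b ≤ β) (hββ : β ≤ β') (hβ1 : β' ≤ 1) {r : ℝ} (hr : 0 < r) :
    ‖CD l t β' ((0:ℝ) + r * v) * v - CD l t β ((0:ℝ) + r * v) * v‖ ≤ 
      ((2 + (η/3)⁻¹) * (η / 3 * ‖l‖)⁻¹ * ((1 + Real.log t) * t ^ (-(2 * β)) * (β' - β))) * 
        CW η b r := by
  have ht0 : 0 < t := by linarith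
  have hti : 0 < t⁻¹ := by positivity
  have hp : 0 < ‖l‖ := norm_pos_iff.2 hl0
  have hreg := hv.reg h0 h1 0 r le_rfl hr.le (by linarith)
  have hre := hv.re 0 r
  have hns : ‖((0:ℝ) + r * v : ℂ)‖ = r := by
    simp [hv.1, abs_of_pos hr]
  set s : ℂ := ((0:ℝ) + r * v : ℂ) with hs
  have hxr := hreg.smul hti
  have hnx : ‖((t⁻¹ : ℝ) : ℂ) * s‖ = t⁻¹ * r := by
    rw [norm_mul, Complex.norm_real, Real.norm_of_nonneg hti.le, hns]
  have hlip := Cq_lip h0 h1 hl0 hl hxr (β := β) (β' := β') 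
    (A := t ^ (-(2 * β)) * (r ^ (2 * b) + r ^ (2:ℝ))) (by linarith) hββ hβ1 (by
      intro ξ hξ
      rw [hnx, Real.mul_rpow hti.le hr.le, mul_pow, ← Real.rpow_natCast, ← Real.rpow_natCast,
        ← Real.rpow_mul hti.le, ← Real.rpow_mul hr.le, Real.inv_rpow ht0.le, ← Real.rpow_neg ht0.le]
      apply mul_le_mul ?_ ?_ (by positivity) (by positivity)
      · exact Real.rpow_le_rpow_of_exponent_le ht (by push_cast; linarith [hξ.1])
      · have hp1 : 0 < r ^ (2 * b) := by positivity
        have hp2 : 0 < r ^ (2:ℝ) := by positivity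
        push_cast
        rcases le_total r 1 with h | h
        · have := Real.rpow_le_rpow_of_exponent_ge hr h (show 2 * b ≤ ξ * 2 by linarith [hξ.1])
          linarith
        · have := Real.rpow_le_rpow_of_exponent_le h (show ξ * 2 ≤ 2 by linarith [hξ.2])
          linarith)
  have hL0 : 0 ≤ Real.log t := Real.log_nonneg ht
  have hlog : ‖Complex.log (((t⁻¹ : ℝ) : ℂ) * s)‖ ≤ 
      (1 + Real.log t) * (4 + r + b⁻¹ * r ^ (-b)) := by
    have h2 : ‖Complex.log (((t⁻¹ : ℝ) : ℂ) * s)‖ ≤ |Real.log (t⁻¹ * r)| + Real.pi := by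
      refine (Complex.norm_le_abs_re_add_abs_im _).trans ?_
      rw [Complex.log_re, Complex.log_im, hnx]
      gcongr
      exact Complex.abs_arg_le_pi _
    have h3 : |Real.log (t⁻¹ * r)| ≤ Real.log t + |Real.log r| := by
      rw [Real.log_mul hti.ne' hr.ne', Real.log_inv]
      refine (abs_add_le _ _).trans ?_
      rw [abs_neg, abs_of_nonneg hL0]
    have h4 := C_log_bd hb0 hr
    have h5 := Real.pi_le_four
    have h6 : 0 < b⁻¹ * r ^ (-b) := by positivity
    nlinarith [mul_nonneg hL0 hr.le, mul_nonneg hL0 h6.le]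
  rw [← sub_mul, norm_mul, hv.1, mul_one, CD, CD, ← mul_sub, norm_mul, norm_mul, norm_inv,
    Complex.norm_exp, hns, hre]
  have hA : CW η b r = Real.exp (0 - η * r) * r⁻¹ * ((4 + r + b⁻¹ * r ^ (-b)) * 
      (r ^ (2 * b) + r ^ (2:ℝ))) := by
    have e1 : r ^ (2*b-1) = r ^ (2 * b) * r⁻¹ := by rw [Real.rpow_sub_one hr.ne']; rfl
    have e2 : r ^ (b-1) = r ^ (-b) * r ^ (2*b) * r⁻¹ := by
      rw [← Real.rpow_add hr, ← div_eq_mul_inv, ← Real.rpow_sub_one hr.ne']; congr 1; ring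
    have e3 : r ^ (1 - b) = r ^ (-b) * r ^ (2:ℝ) * r⁻¹ := by
      rw [← Real.rpow_add hr, ← div_eq_mul_inv, ← Real.rpow_sub_one hr.ne']; congr 1; ring
    rw [CW, e1, e2, e3, Real.rpow_one, Real.rpow_two, zero_sub, neg_mul]
    field_simp
    ring
  rw [hA]
  refine (mul_le_mul_of_nonneg_left hlip (by positivity)).trans ?_
  have hbb : 0 ≤ β' - β := by linarith
  calc _ ≤ Real.exp (0 - η * r) * r⁻¹ * (((1 + Real.log t) * (4 + r + b⁻¹ * r ^ (-b))) * 
        (t ^ (-(2 * β)) * (r ^ (2 * b) + r ^ (2:ℝ)) * ((2 + (η/3)⁻¹) * (η / 3 * ‖l‖)⁻¹)) * (β' - β)) := by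
        gcongr
    _ = _ := by ring

lemma C_ray_lip {η b : ℝ} (h0 : 0 < η) (h1 : η ≤ 1/2) (hb0 : 0 < b) (hb1 : b < 1) {l : ℂ} 
    (hl0 : l ≠ 0) (hl : l.re ≤ -(2 * η) * ‖l‖) {t : ℝ} (ht : 1 ≤ t) {v : ℂ} (hv : CDir η v)
    {β β' : ℝ} (hβ0 : b ≤ β) (hββ : β ≤ β') (hβ1 : β' ≤ 1) :
    ‖CRay (CD l t β') 0 v - CRay (CD l t β) 0 v‖ ≤ 
      ((2 + (η/3)⁻¹) * (η / 3 * ‖l‖)⁻¹ * ((1 + Real.log t) * t ^ (-(2 * β)) * (β' - β))) * 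
        ∫ r in Ioi (0:ℝ), CW η b r := by
  have ht0 : 0 < t := by linarith
  unfold CRay
  rw [← integral_sub (C_ray_decomp h0 h1 (by linarith) (by linarith) hl0 hl ht0 hv).1
    (C_ray_decomp h0 h1 (by linarith) (by linarith) hl0 hl ht0 hv).1, ← integral_const_mul]
  apply norm_integral_le_of_norm_le ((CW_int h0 hb0 hb1).const_mul _)
  filter_upwards [ae_restrict_mem measurableSet_Ioi] with r hr
  exact CD_lip h0 h1 hb0 hl0 hl ht hv hβ0 hββ hβ1 hr

lemma C_scalar (l : ℂ) (hl : l.re < 0) (b : ℝ) (hb0 : 0 < b) (hb1 : b < 1) :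
    ∀ᶠ t : ℝ in atTop, ∀ β β' : ℝ, b ≤ β → β < β' → β' ≤ 1 → 
      mittagLeffler β (l * ((t ^ β : ℝ) : ℂ)) ≠ mittagLeffler β' (l * ((t ^ β' : ℝ) : ℂ)) := by
  have hl0 : l ≠ 0 := by rintro rfl; simp at hl
  have hp : 0 < ‖l‖ := norm_pos_iff.2 hl0
  obtain ⟨η, h0, h1, hle⟩ : ∃ η : ℝ, 0 < η ∧ η ≤ 1/2 ∧ l.re ≤ -(2 * η) * ‖l‖ := by
    refine ⟨-l.re / (2 * ‖l‖), by apply div_pos <;> linarith, ?_, ?_⟩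
    · rw [div_le_iff₀ (by positivity)]
      have := (abs_le.1 (Complex.abs_re_le_norm l)).1
      linarith
    · apply le_of_eq; field_simp
  set M : ℝ := 2 * ((2 + (η/3)⁻¹) * (η / 3 * ‖l‖)⁻¹ * ∫ r in Ioi (0:ℝ), CW η b r) with hM
  have hlim : Tendsto (fun t : ℝ => M * ((1 + Real.log t) * t ^ (-b))) atTop (𝓝 0) := by
    rw [show (0:ℝ) = M * (0 + 0) by simp]
    apply Tendsto.const_mul
    have ha := tendsto_rpow_neg_atTop hb0
    have hb := (isLittleO_log_rpow_atTop hb0).tendsto_div_nhds_zero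
    refine (ha.add hb).congr' ?_
    filter_upwards [eventually_gt_atTop 0] with t ht
    rw [Real.rpow_neg ht.le]; ring
  have hl2 : 0 < 1 - Real.log 2 := by have := Real.log_two_lt_d9; linarith
  filter_upwards [eventually_ge_atTop 1, hlim.eventually_lt_const hl2] with t ht hlt β β' hβ hββ hβ1 heq
  have ht0 : 0 < t := by linarith
  have d1 := C_decomp h0 h1 (β := β) (by linarith) (by linarith) hl0 hle ht0
  have d2 := C_decomp h0 h1 (β := β') (by linarith) (by linarith) hl0 hle ht0
  have r1 := C_ray_lip h0 h1 hb0 hb1 hl0 hle ht (Cv_dir h0 h1) hβ hββ.le hβ1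
  have r2 := C_ray_lip h0 h1 hb0 hb1 hl0 hle ht (Cw_dir h0 h1) hβ hββ.le hβ1
  set R : ℝ := t ^ (-β) * (Real.Gamma (1 - β))⁻¹ - t ^ (-β') * (Real.Gamma (1 - β'))⁻¹ with hR
  have hdiff : CH η (CD l t β) 0 - CH η (CD l t β') 0 = 2 * Real.pi * Complex.I * (R:ℂ) := by
    rw [d1, d2, heq, hR]; push_cast; ring
  have hnorm : ‖CH η (CD l t β) 0 - CH η (CD l t β') 0‖ ≤ 
      M * ((1 + Real.log t) * t ^ (-(2 * β)) * (β' - β)) := by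
    have e : CH η (CD l t β) 0 - CH η (CD l t β') 0 = 
      (CRay (CD l t β') 0 (Cw η) - CRay (CD l t β) 0 (Cw η)) - 
      (CRay (CD l t β') 0 (Cv η) - CRay (CD l t β) 0 (Cv η)) := by unfold CH; ring
    rw [e]
    refine (norm_sub_le _ _).trans ((add_le_add r2 r1).trans (le_of_eq ?_))
    rw [hM]; ring
  rw [hdiff] at hnorm
  have hg := C_gamma_slope (x := 1 - β) (y := 1 - β') (by linarith) (by linarith) (by linarith)
  have hgpos : 0 ≤ (Real.Gamma (1 - β'))⁻¹ := inv_nonneg.2 (Real.Gamma_nonneg_of_nonneg (by linarith))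
  have htb : 0 < t ^ (-β) := by positivity
  have htm : t ^ (-β') ≤ t ^ (-β) := Real.rpow_le_rpow_of_exponent_le ht (by linarith)
  have hRlow : t ^ (-β) * ((1 - Real.log 2) * (β' - β)) ≤ R := by
    have a1 : t ^ (-β') * (Real.Gamma (1 - β'))⁻¹ ≤ t ^ (-β) * (Real.Gamma (1 - β'))⁻¹ := by gcongr
    have a2 := mul_le_mul_of_nonneg_left hg htb.le
    rw [show 1 - β - (1 - β') = β' - β by ring] at a2
    rw [hR]; linarith
  have hbb : 0 < β' - β := by linarith
  have hRn : R ≤ ‖2 * Real.pi * Complex.I * (R:ℂ)‖ := by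
    have : ‖2 * Real.pi * Complex.I * (R:ℂ)‖ = 2 * Real.pi * |R| := by
      simp [abs_of_pos Real.pi_pos]
    rw [this]
    have := Real.pi_gt_three
    have := le_abs_self R
    nlinarith [abs_nonneg R]
  have hfin := hRlow.trans (hRn.trans hnorm)
  have hM0 : 0 ≤ M := by
    rw [hM]
    have : 0 ≤ ∫ r in Ioi (0:ℝ), CW η b r := by
      apply setIntegral_nonneg measurableSet_Ioi
      intro r hr
      have hr : 0 < r := hr
      unfold CW; positivity
    positivity
  have hL0 : 0 ≤ Real.log t := Real.log_nonneg ht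
  have e2 : t ^ (-(2 * β)) ≤ t ^ (-β) * t ^ (-b) := by
    rw [← Real.rpow_add ht0]
    exact Real.rpow_le_rpow_of_exponent_le ht (by linarith)
  have hfin2 : t ^ (-β) * (β' - β) * (1 - Real.log 2) ≤ 
      t ^ (-β) * (β' - β) * (M * ((1 + Real.log t) * t ^ (-b))) := by
    calc _ = t ^ (-β) * ((1 - Real.log 2) * (β' - β)) := by ring
      _ ≤ _ := hfin
      _ ≤ M * ((1 + Real.log t) * (t ^ (-β) * t ^ (-b)) * (β' - β)) := by gcongr
      _ = _ := by ring
  have := le_of_mul_le_mul_left hfin2 (by positivity)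
  linarith

/-- **Uniqueness of the vector-order.** Let `K` be an invertible `m × m` complex
matrix, `Re λ_l < 0` for all `l`, and `0 < β₀ < 1`. Then there is `T₀ > 1` such
that for all `t₀ ≥ T₀` the map
`B ↦ (∑_l K_{j,l} E_{B_l}(λ_l t₀^{B_l}))_j` is injective on `[β₀, 1]^m`. -/
theorem caputo_order_map_injective (m : ℕ) (hm : 1 ≤ m)
    (K : Matrix (Fin m) (Fin m) ℂ) (hK : IsUnit K)
    (lam : Fin m → ℂ) (hlam : ∀ l, (lam l).re < 0)
    (β₀ : ℝ) (hβ₀ : 0 < β₀) (hβ₀1 : β₀ < 1) :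
    ∃ T₀ : ℝ, 1 < T₀ ∧ ∀ t₀ : ℝ, T₀ ≤ t₀ →
      Set.InjOn
        (fun B : Fin m → ℝ => fun j : Fin m =>
          ∑ l, K j l * mittagLeffler (B l) (lam l * ((t₀ ^ (B l) : ℝ) : ℂ)))
        {B : Fin m → ℝ | ∀ l, B l ∈ Set.Icc β₀ 1} := by
  have hev : ∀ᶠ t : ℝ in Filter.atTop, ∀ i, ∀ β β' : ℝ, β₀ ≤ β → β < β' → β' ≤ 1 →
      mittagLeffler β (lam i * ((t ^ β : ℝ) : ℂ)) ≠ mittagLeffler β' (lam i * ((t ^ β' : ℝ) : ℂ)) :=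
    Filter.eventually_all.2 fun i => C_scalar (lam i) (hlam i) β₀ hβ₀ hβ₀1
  obtain ⟨T, hT⟩ := Filter.eventually_atTop.1 hev
  refine ⟨max T 2, lt_of_lt_of_le (by norm_num) (le_max_right _ _), ?_⟩
  intro t ht B hB B' hB' h
  have hinj := Matrix.mulVec_injective_of_isUnit hK
  have hvec : (fun l => mittagLeffler (B l) (lam l * ((t ^ (B l) : ℝ) : ℂ))) =
      (fun l => mittagLeffler (B' l) (lam l * ((t ^ (B' l) : ℝ) : ℂ))) := by
    apply hinj
    ext j
    have := congrFun h j
    simpa [Matrix.mulVec, dotProduct] using this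
  funext i
  have hi := congrFun hvec i
  have hTi := hT t (le_trans (le_max_left _ _) ht) i
  rcases lt_trichotomy (B i) (B' i) with hlt | heq | hgt
  · exact absurd hi (hTi _ _ (hB i).1 hlt (hB' i).2)
  · exact heq
  · exact absurd hi.symm (hTi _ _ (hB' i).1 hgt (hB i).2)
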